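/- Let ε ∈ (0,1), δ ≥ 0, let G be a d-regular simple graph on n vertices (d > 0), and let X = (X₁,…,Xₙ) be a random vector with each Xᵤ taking values in the alphabet {1,2,3} ∪ {⊥}. Suppose: (i) for every edge (u,v) of G and every color σ ∈ {1,2,3}, Pr[Xᵤ = σ ∧ Xᵥ = σ] = 0; (ii) (1/n) Σ_{u∈[n]} Pr[Xᵤ = ⊥] ≤ δ; and (iii) the local correlation bound (1/(n·d)) · Σ_{(u,v): u adjacent to v} Σ_{σ∈{1,2,3}} Pr[Xᵤ = σ]² · Pr[Xᵥ = σ]² ≤ ε/50 holds, where the sum is over ordered pairs of adjacent vertices. Let γ = 1/1000 and for σ ∈ {1,2,3} define S_σ = { u ∈ [n] : Pr[Xᵤ = σ] ≥ 1/2 + γ }. Then S₁, S₂, S₃ are pairwise disjoint independent sets of G and |S₁ ∪ S₂ ∪ S₃| ≥ (1/2 − ε/2 − 1000·δ)·n. In particular, coloring each S_σ with color σ gives a proper partial 3-coloring of at least (1/2 − ε/2 − 1000δ)n vertices. -/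

import Mathlib

/-!
For a vertex `u` write `p_u(σ) = Pr[X_u = σ]` and `b_u = Pr[X_u = ⊥]`, so that
`∑_σ p_u(σ) + b_u = 1`. Two events that almost surely do not co-occur have probabilities
summing to at most `1`, so they cannot both have probability above `1/2`; this gives
disjointness of the `S_σ` and, by the edge hypothesis, their independence.

For the size bound, call `u` *balanced* if `p_u(σ) < 1/2 + γ` for all `σ` and `b_u < γ`, where
`γ = 1/1000`. If `u` and `v` are both balanced, the vectors `p_u`, `p_v` lie (up to `O(γ)`) in the
triangle with vertices the permutations of `(1/2, 1/2, 0)`, on which the inner product is at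
least `1/4`; by Cauchy–Schwarz `∑_σ p_u(σ)² p_v(σ)² ≥ (∑_σ p_u(σ) p_v(σ))² / 3`, which is about
`1/48` and in any case at least `1/50` (`balanced_pair_bound`). Hence for the indicator `i` of the
balanced set `B`, the correlation of every edge is at least `(i(u) + i(v) - 1)/50`, and summing
over a `d`-regular graph gives `(2|B| - n) d / 50 ≤ n d ε / 50`, i.e. `|B| ≤ (1 + ε) n / 2`. A
vertex outside `B` lies in some `S_σ` or has `b_u ≥ γ`, and by Markov's inequality at most
`1000 δ n` vertices are of the second kind.
-/

-- `prEvent w E` is the probability of the event `E` under the finitely supported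
-- probability distribution given by the weight function `w`.
open scoped Classical in
noncomputable def prEvent {Ω : Type*} [Fintype Ω] (w : Ω → ℝ) (E : Ω → Prop) : ℝ :=
  ∑ ω ∈ Finset.univ.filter E, w ω

lemma prEvent_nonneg {Ω : Type*} [Fintype Ω] {w : Ω → ℝ} (hw : ∀ ω, 0 ≤ w ω) (E : Ω → Prop) :
    0 ≤ prEvent w E :=
  Finset.sum_nonneg fun ω _ => hw ω

lemma prEvent_eq_zero {Ω : Type*} [Fintype Ω] (w : Ω → ℝ) {E : Ω → Prop} (h : ∀ ω, ¬ E ω) :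
    prEvent w E = 0 := by
  simp [prEvent, h]

lemma prEvent_add_le_one {Ω : Type*} [Fintype Ω] {w : Ω → ℝ} (hw : ∀ ω, 0 ≤ w ω)
    (hw1 : ∑ ω, w ω = 1) (E F : Ω → Prop) (h : prEvent w (fun ω => E ω ∧ F ω) = 0) :
    prEvent w E + prEvent w F ≤ 1 := by
  classical
  have key : prEvent w E + prEvent w F ≤ ∑ ω, w ω + prEvent w (fun ω => E ω ∧ F ω) := by
    simp only [prEvent, Finset.sum_filter, ← Finset.sum_add_distrib]
    refine Finset.sum_le_sum fun ω _ => ?_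
    have := hw ω
    by_cases hE : E ω <;> by_cases hF : F ω <;> simp [hE, hF, this]
  linarith

lemma prEvent_total {Ω : Type*} [Fintype Ω] {w : Ω → ℝ} (hw1 : ∑ ω, w ω = 1)
    (Y : Ω → Option (Fin 3)) :
    (∑ σ, prEvent w (fun ω => Y ω = some σ)) + prEvent w (fun ω => Y ω = none) = 1 := by
  classical
  rw [← hw1]
  simp only [prEvent, Finset.sum_filter, Fin.sum_univ_three, ← Finset.sum_add_distrib]
  refine Finset.sum_congr rfl fun ω _ => ?_
  rcases Option.eq_none_or_eq_some (Y ω) with hY | ⟨σ, hY⟩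
  · simp [hY]
  · fin_cases σ <;> simp [hY]

/-- Two nearly-stochastic vectors with all entries at most about `1/2` have squared-entry
correlation at least `1/50`. -/
lemma balanced_pair_bound (p q : Fin 3 → ℝ)
    (hp : ∀ σ, p σ < 1/2 + 1/1000) (hq : ∀ σ, q σ < 1/2 + 1/1000)
    (hp1 : 1 - 1/1000 < ∑ σ, p σ) (hq1 : 1 - 1/1000 < ∑ σ, q σ) :
    1/50 ≤ ∑ σ, p σ ^ 2 * q σ ^ 2 := by
  rw [Fin.sum_univ_three] at *
  -- The product `(h - p)(h - q)` of slacks, `h = 1/2 + γ`, is nonnegative in each coordinate.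
  have s : ∀ σ, 0 ≤ (1/2 + 1/1000 - p σ) * (1/2 + 1/1000 - q σ) := fun σ =>
    mul_nonneg (by linarith [hp σ]) (by linarith [hq σ])
  have inner : (247/1000 : ℝ) ≤ p 0 * q 0 + p 1 * q 1 + p 2 * q 2 := by
    linarith [s 0, s 1, s 2]
  have cs : (p 0 * q 0 + p 1 * q 1 + p 2 * q 2) ^ 2 ≤
      3 * (p 0 ^ 2 * q 0 ^ 2 + p 1 ^ 2 * q 1 ^ 2 + p 2 ^ 2 * q 2 ^ 2) := by
    linarith [sq_nonneg (p 0 * q 0 - p 1 * q 1), sq_nonneg (p 0 * q 0 - p 2 * q 2),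
      sq_nonneg (p 1 * q 1 - p 2 * q 2)]
  have sq : (247/1000 : ℝ) ^ 2 ≤ (p 0 * q 0 + p 1 * q 1 + p 2 * q 2) ^ 2 := by gcongr
  linarith

/-- Summing `(i(u) + i(v) - 1)/50`, `i` the indicator of `B`, over the ordered edges of a
`d`-regular graph gives `(2|B| - n) d / 50`. -/
lemma edge_sum_lower_bound {n d : ℕ} (G : SimpleGraph (Fin n)) [DecidableRel G.Adj]
    (hreg : G.IsRegularOfDegree d) (f : Fin n → Fin n → ℝ) (hf : ∀ u v, 0 ≤ f u v)
    (B : Finset (Fin n)) (hB : ∀ u ∈ B, ∀ v ∈ B, 1/50 ≤ f u v) :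
    (2 * (B.card : ℝ) - n) * d / 50 ≤ ∑ u, ∑ v, if G.Adj u v then f u v else 0 := by
  set i : Fin n → ℝ := fun u => if u ∈ B then 1 else 0 with hi
  have hcard : ∑ u, i u = B.card := by simp [hi]
  have hdeg : ∀ u, ∑ v, (if G.Adj u v then (1 : ℝ) else 0) = d := fun u => by
    rw [Finset.sum_boole, ← SimpleGraph.neighborFinset_eq_filter,
      SimpleGraph.card_neighborFinset_eq_degree, hreg u]
  have h1 : ∑ u, ∑ v, (if G.Adj u v then (1 : ℝ) else 0) * i u = d * B.card := by
    simp only [← Finset.sum_mul, hdeg, ← Finset.mul_sum, hcard]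
  have h2 : ∑ u, ∑ v, (if G.Adj u v then (1 : ℝ) else 0) * i v = d * B.card := by
    rw [Finset.sum_comm, ← h1]
    simp only [G.adj_comm]
  have h3 : ∑ u, ∑ v, (if G.Adj u v then (1 : ℝ) else 0) = n * d := by
    simp [hdeg]
  calc (2 * (B.card : ℝ) - n) * d / 50
      = ∑ u, ∑ v, (if G.Adj u v then (1 : ℝ) else 0) * ((i u + i v - 1) / 50) := by
        have : ∀ u v, (if G.Adj u v then (1 : ℝ) else 0) * ((i u + i v - 1) / 50) =
            ((if G.Adj u v then (1 : ℝ) else 0) * i u + (if G.Adj u v then (1 : ℝ) else 0) * i v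
              - (if G.Adj u v then (1 : ℝ) else 0)) / 50 := fun u v => by ring
        simp only [this, ← Finset.sum_div, Finset.sum_sub_distrib, Finset.sum_add_distrib,
          h1, h2, h3]
        ring
    _ ≤ _ := by
        refine Finset.sum_le_sum fun u _ => Finset.sum_le_sum fun v _ => ?_
        have h0 := hf u v
        by_cases ha : G.Adj u v
        · by_cases hu : u ∈ B
          · by_cases hv : v ∈ B
            · have := hB u hu v hv
              simp only [ha, hi, hu, hv, if_true]
              linarith
            · simpa [ha, hi, hu, hv] using h0
          · by_cases hv : v ∈ B
            · simpa [ha, hi, hu, hv] using h0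
            · simp only [ha, hi, hu, hv, if_true, if_false]
              linarith
        · simp [ha]

open scoped Classical in
/-- **Core of the main 3-coloring theorem.**
Let `G` be a `d`-regular simple graph on `n` vertices and `X = (X₁,…,Xₙ)` a
random vector (given by the weights `w` on a finite sample space `Ω`) with
values in `({1,2,3} ∪ {⊥})ⁿ`, modeled as `Fin n → Option (Fin 3)`. Assume:
(i) no edge is monochromatic in any color: for every edge `(u,v)` and color `σ`,
`Pr[Xᵤ = σ ∧ Xᵥ = σ] = 0`; (ii) `(1/n)·∑ᵤ Pr[Xᵤ = ⊥] ≤ δ`; and (iii) the local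
correlation bound `E_{(u,v)∼G}[∑_σ Pr[Xᵤ = σ]²·Pr[Xᵥ = σ]²] ≤ ε/50`. With
`γ = 1/1000` and `S_σ = {u : Pr[Xᵤ = σ] ≥ 1/2 + γ}`, the sets `S₁, S₂, S₃` are
pairwise disjoint independent sets and `|S₁ ∪ S₂ ∪ S₃| ≥ (1/2 − ε/2 − 1000δ)·n`. -/
theorem coloring_from_low_local_correlation
    {n d : ℕ} (hd : 0 < d) (ε δ : ℝ) (hε : ε ∈ Set.Ioo (0 : ℝ) 1) (hδ : 0 ≤ δ)
    (G : SimpleGraph (Fin n)) [DecidableRel G.Adj] (hreg : G.IsRegularOfDegree d)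
    {Ω : Type*} [Fintype Ω] (w : Ω → ℝ)
    (hw : ∀ ω, 0 ≤ w ω) (hw1 : ∑ ω, w ω = 1)
    (X : Ω → Fin n → Option (Fin 3))
    (hedge : ∀ u v, G.Adj u v → ∀ σ : Fin 3,
      prEvent w (fun ω => X ω u = some σ ∧ X ω v = some σ) = 0)
    (hbot : (1 / (n : ℝ)) * ∑ u, prEvent w (fun ω => X ω u = none) ≤ δ)
    (hlocal : (1 / ((n : ℝ) * d)) * ∑ u, ∑ v,
        (if G.Adj u v then
          ∑ σ : Fin 3, prEvent w (fun ω => X ω u = some σ) ^ 2 *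
            prEvent w (fun ω => X ω v = some σ) ^ 2
        else 0) ≤ ε / 50)
    (S : Fin 3 → Finset (Fin n))
    (hS : ∀ σ : Fin 3, S σ =
      Finset.univ.filter fun u => 1/2 + 1/1000 ≤ prEvent w (fun ω => X ω u = some σ)) :
    (∀ σ τ : Fin 3, σ ≠ τ → Disjoint (S σ) (S τ)) ∧
      (∀ σ : Fin 3, ∀ u ∈ S σ, ∀ v ∈ S σ, ¬ G.Adj u v) ∧
      (1/2 - ε/2 - 1000 * δ) * n ≤ ((S 0 ∪ S 1 ∪ S 2).card : ℝ) := by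
  have hmem : ∀ σ u, u ∈ S σ ↔ 1/2 + 1/1000 ≤ prEvent w (fun ω => X ω u = some σ) := by
    intro σ u
    rw [hS σ, Finset.mem_filter]
    simp only [Finset.mem_univ, true_and]
  refine ⟨?_, ?_, ?_⟩
  · intro σ τ hne
    rw [Finset.disjoint_left]
    intro u hσ hτ
    rw [hmem] at hσ hτ
    have hzero : prEvent w (fun ω => X ω u = some σ ∧ X ω u = some τ) = 0 := by
      refine prEvent_eq_zero w ?_
      rintro ω ⟨h1, h2⟩
      exact hne (Option.some_injective _ (h1.symm.trans h2))
    have := prEvent_add_le_one hw hw1 _ _ hzero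
    linarith
  · intro σ u hu v hv hadj
    rw [hmem] at hu hv
    have := prEvent_add_le_one hw hw1 _ _ (hedge u v hadj σ)
    linarith
  · rcases Nat.eq_zero_or_pos n with hn | hn
    · subst hn
      rw [Nat.cast_zero, mul_zero]
      positivity
    have hnR : (0 : ℝ) < n := by exact_mod_cast hn
    have hdR : (0 : ℝ) < d := by exact_mod_cast hd
    set b : Fin n → ℝ := fun u => prEvent w (fun ω => X ω u = none) with hb
    set p : Fin n → Fin 3 → ℝ := fun u σ => prEvent w (fun ω => X ω u = some σ) with hp
    have htot : ∀ u, ∑ σ, p u σ + b u = 1 := fun u => prEvent_total hw1 fun ω => X ω u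
    have hb0 : ∀ u, 0 ≤ b u := fun u => prEvent_nonneg hw _
    let H : Finset (Fin n) := Finset.univ.filter fun u => 1/1000 ≤ b u
    let B : Finset (Fin n) :=
      Finset.univ.filter fun u => (∀ σ, p u σ < 1/2 + 1/1000) ∧ b u < 1/1000
    have hBcard : (B.card : ℝ) ≤ (1 + ε) / 2 * n := by
      have hlow := edge_sum_lower_bound G hreg (fun u v => ∑ σ, p u σ ^ 2 * p v σ ^ 2)
        (fun u v => Finset.sum_nonneg fun σ _ => by positivity) B (by
          intro u hu v hv
          obtain ⟨-, hu1, hu2⟩ := Finset.mem_filter.1 hu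
          obtain ⟨-, hv1, hv2⟩ := Finset.mem_filter.1 hv
          exact balanced_pair_bound _ _ hu1 hv1 (by linarith [htot u]) (by linarith [htot v]))
      rw [one_div, inv_mul_le_iff₀ (by positivity)] at hlocal
      have h : (2 * (B.card : ℝ) - n) * d ≤ (n * ε) * d := by linarith [hlow.trans hlocal]
      have := le_of_mul_le_mul_right h hdR
      linarith
    have hHcard : (H.card : ℝ) ≤ 1000 * δ * n := by
      rw [one_div, inv_mul_le_iff₀ hnR] at hbot
      have h1 : H.card • (1/1000 : ℝ) ≤ ∑ u ∈ H, b u :=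
        Finset.card_nsmul_le_sum _ _ _ fun u hu => (Finset.mem_filter.1 hu).2
      have h2 : ∑ u ∈ H, b u ≤ ∑ u, b u :=
        Finset.sum_le_sum_of_subset_of_nonneg (Finset.subset_univ _) fun u _ _ => hb0 u
      rw [nsmul_eq_mul] at h1
      linarith
    have hcover : (Finset.univ : Finset (Fin n)) ⊆ (S 0 ∪ S 1 ∪ S 2) ∪ (B ∪ H) := by
      intro u _
      by_cases hH : 1/1000 ≤ b u
      · exact Finset.mem_union_right _ (Finset.mem_union_right _ (by simpa [H] using hH))
      · by_cases hall : ∀ σ, p u σ < 1/2 + 1/1000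
        · exact Finset.mem_union_right _ (Finset.mem_union_left _
            (Finset.mem_filter.2 ⟨Finset.mem_univ _, hall, not_le.1 hH⟩))
        · push Not at hall
          obtain ⟨σ, hσ⟩ := hall
          have hσ' := (hmem σ u).2 hσ
          refine Finset.mem_union_left _ ?_
          simp only [Finset.mem_union]
          fin_cases σ
          · exact Or.inl (Or.inl hσ')
          · exact Or.inl (Or.inr hσ')
          · exact Or.inr hσ'
    have hn_le : (n : ℝ) ≤ (S 0 ∪ S 1 ∪ S 2).card + (B.card + H.card) := by
      have h := Finset.card_le_card hcover
      have h1 := Finset.card_union_le (S 0 ∪ S 1 ∪ S 2) (B ∪ H)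
      have h2 := Finset.card_union_le B H
      rw [Finset.card_univ, Fintype.card_fin] at h
      exact_mod_cast h.trans (h1.trans (Nat.add_le_add_left h2 _))
    linarith
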